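/- Let L ≥ 1, a < b with b − a ≥ 1, k ≥ 1 an integer and r > 0. For each odd integer n ≥ 3 and each S ∈ Σ_L, let λ̃ = λ̃_{n,S} denote the Pinsker weight sequence with parameter t = t̃_n(S). Then lim_{n→∞, n odd} sup_{S ∈ Σ_L} | n^{−1/(2k+1)} Σ_{j=1}^n λ̃(j)² − (A_k · r/J(S))^{1/(2k+1)} · 2k²/((k+1)(2k+1)) | = 0. -/

import Mathlib

open MeasureTheory Real Set Filter

noncomputable section

/-- `f` is Lipschitz with constant `L` and continuous. -/
def IsLip (L : ℝ) (f : ℝ → ℝ) : Prop :=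
  Continuous f ∧ ∀ x y : ℝ, |f x - f y| ≤ L * |x - y|

/-- The functional class `Σ_L`. -/
def SigmaL (L : ℝ) (S : ℝ → ℝ) : Prop :=
  IsLip L S ∧ (∀ z : ℝ, |z| ≤ L → |S z| ≤ L) ∧
  ∃ S' : ℝ → ℝ, ContinuousOn S' {x : ℝ | L ≤ |x|} ∧
    ∀ x : ℝ, L ≤ |x| → HasDerivAt S (S' x) x ∧ -L ≤ S' x ∧ S' x ≤ -(1/L)

/-- Normalizing constant of the ergodic density. -/
def qdenom (S : ℝ → ℝ) : ℝ := ∫ y : ℝ, Real.exp (2 * ∫ z in (0:ℝ)..y, S z)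

/-- The ergodic density `q_S`. -/
def qdens (S : ℝ → ℝ) (x : ℝ) : ℝ :=
  Real.exp (2 * ∫ z in (0:ℝ)..x, S z) / qdenom S

/-- `J(S) = ∫_a^b 1/q_S(u) du`. -/
def Jfun (a b : ℝ) (S : ℝ → ℝ) : ℝ := ∫ u in a..b, 1 / qdens S u

end

noncomputable section

/-- `ε_n = 1 / ln n`. -/
def epsn (n : ℕ) : ℝ := 1 / Real.log n

/-- `t̃_n(S) = ε_n · min{ i ≥ 1 : i ε_n ≥ r/J(S) }`. -/
def ttilde (a b r : ℝ) (n : ℕ) (S : ℝ → ℝ) : ℝ :=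
  epsn n * (sInf {i : ℕ | 1 ≤ i ∧ r / Jfun a b S ≤ (i : ℝ) * epsn n} : ℕ)

/-- `A_k = (b−a)^{2k+1}(k+1)(2k+1)/(π^{2k} k)`. -/
def Ak (a b : ℝ) (k : ℕ) : ℝ :=
  (b - a) ^ (2 * k + 1) * ((k : ℝ) + 1) * (2 * (k : ℝ) + 1) / (Real.pi ^ (2 * k) * k)

/-- `ω = (A_k t n)^{1/(2k+1)}`. -/
def pinskerOmega (a b : ℝ) (k : ℕ) (t : ℝ) (n : ℕ) : ℝ :=
  (Ak a b k * t * n) ^ ((1 : ℝ) / (2 * k + 1))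

/-- `j_0 = ⌊ω / ln(n+2)⌋ + 1`. -/
def pinskerJ0 (a b : ℝ) (k : ℕ) (t : ℝ) (n : ℕ) : ℕ :=
  ⌊pinskerOmega a b k t n / Real.log (n + 2)⌋₊ + 1

/-- The Pinsker weights: `λ(j) = 1` for `j ≤ j_0`,
`λ(j) = (1 − (j/ω)^k)₊` for `j_0 < j ≤ n`, and `λ(j) = 0` for `j > n`. -/
def pinskerWeight (a b : ℝ) (k : ℕ) (t : ℝ) (n : ℕ) (j : ℕ) : ℝ :=
  if j ≤ pinskerJ0 a b k t n then 1
  else if j ≤ n then max 0 (1 - ((j : ℝ) / pinskerOmega a b k t n) ^ k)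
  else 0

end


lemma aux_integral (k : ℕ) (w : ℝ) (hw : 0 < w) :
    ∫ x in (0:ℝ)..w, (1 - (x / w) ^ k) ^ 2 =
      w * (2 * (k : ℝ) ^ 2 / (((k : ℝ) + 1) * (2 * (k : ℝ) + 1))) := by
  have h1 := intervalIntegral.integral_comp_div (a := 0) (b := w)
    (fun y : ℝ => (1 - y ^ k) ^ 2) hw.ne'
  rw [h1, zero_div, div_self hw.ne', smul_eq_mul]
  congr 1
  have h2 : ∀ y : ℝ, (1 - y ^ k) ^ 2 = 1 - 2 * y ^ k + y ^ (2 * k) := by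
    intro y; rw [pow_mul' y 2 k]; ring
  simp_rw [h2]
  rw [intervalIntegral.integral_add, intervalIntegral.integral_sub,
    intervalIntegral.integral_const_mul, integral_pow, integral_pow]
  · simp
    field_simp
    ring
  all_goals exact Continuous.intervalIntegrable (by fun_prop) _ _

lemma aux_anti (k : ℕ) (w : ℝ) (hw : 0 < w) (s : Set ℝ) (hs : ∀ x ∈ s, 0 ≤ x) :
    AntitoneOn (fun x : ℝ => (max 0 (1 - (x / w) ^ k)) ^ 2) s := by
  intro x hx y hy hxy
  have h0 := hs x hx
  simp only
  gcongr

lemma aux_integral2 (k n : ℕ) (hk : 1 ≤ k) (w : ℝ) (hw : 0 < w) (hn : w ≤ n) :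
    ∫ x in (0:ℝ)..n, (max 0 (1 - (x / w) ^ k)) ^ 2 =
      w * (2 * (k : ℝ) ^ 2 / (((k : ℝ) + 1) * (2 * (k : ℝ) + 1))) := by
  have hc : Continuous (fun x : ℝ => (max 0 (1 - (x / w) ^ k)) ^ 2) := by fun_prop
  rw [← intervalIntegral.integral_add_adjacent_intervals (b := w)
    (hc.intervalIntegrable _ _) (hc.intervalIntegrable _ _), ← aux_integral k w hw]
  have e2 : ∫ x in w..n, (max 0 (1 - (x / w) ^ k)) ^ 2 = ∫ x in w..n, (0:ℝ) := by
    apply intervalIntegral.integral_congr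
    intro x hx
    rw [uIcc_of_le hn] at hx
    have : 1 ≤ (x / w) ^ k := one_le_pow₀ ((one_le_div hw).2 hx.1)
    simp only
    rw [max_eq_left (by linarith)]; simp
  have e1 : ∫ x in (0:ℝ)..w, (max 0 (1 - (x / w) ^ k)) ^ 2 =
      ∫ x in (0:ℝ)..w, (1 - (x / w) ^ k) ^ 2 := by
    apply intervalIntegral.integral_congr
    intro x hx
    rw [uIcc_of_le hw.le] at hx
    have : (x / w) ^ k ≤ 1 := pow_le_one₀ (div_nonneg hx.1 hw.le) ((div_le_one hw).2 hx.2)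
    simp only
    rw [max_eq_right (by linarith)]
  rw [e1, e2]; simp

lemma aux_sum (k n : ℕ) (hk : 1 ≤ k) (w : ℝ) (hw : 0 < w) (hn : w ≤ n) :
    |∑ j ∈ Finset.Icc 1 n, (max 0 (1 - ((j:ℝ) / w) ^ k)) ^ 2 -
      w * (2 * (k : ℝ) ^ 2 / (((k : ℝ) + 1) * (2 * (k : ℝ) + 1)))| ≤ 1 := by
  rw [← aux_integral2 k n hk w hw hn]
  have ha := aux_anti k w hw (Icc 0 (0 + (n:ℝ))) (fun x hx => hx.1)
  have h1 := ha.sum_le_integral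
  have h2 := ha.integral_le_sum
  simp only [zero_add] at h1 h2
  have e : ∑ j ∈ Finset.Icc 1 n, (max 0 (1 - ((j:ℝ) / w) ^ k)) ^ 2 =
      ∑ i ∈ Finset.range n, (max 0 (1 - (((i + 1 : ℕ):ℝ) / w) ^ k)) ^ 2 := by
    rw [Finset.range_eq_Ico,
      Finset.sum_Ico_add' (fun j : ℕ => (max 0 (1 - ((j:ℝ) / w) ^ k)) ^ 2) 0 n 1]
    rfl
  rw [e]
  have h3 := Finset.sum_range_succ (fun i : ℕ => (max 0 (1 - ((i:ℝ) / w) ^ k)) ^ 2) n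
  rw [Finset.sum_range_succ'] at h3
  have h4 : (max 0 (1 - (((0:ℕ):ℝ) / w) ^ k)) ^ 2 = 1 := by
    simp [zero_pow (by omega : k ≠ 0)]
  have h5 : 0 ≤ (max 0 (1 - ((n:ℝ) / w) ^ k)) ^ 2 := by positivity
  rw [h4] at h3
  rw [abs_le]
  constructor <;> linarith

lemma aux_weight (a b : ℝ) (k n : ℕ) (hk : 1 ≤ k) (t : ℝ)
    (hw : 0 < pinskerOmega a b k t n) (hn : pinskerOmega a b k t n ≤ n) :
    |∑ j ∈ Finset.Icc 1 n, (pinskerWeight a b k t n j) ^ 2 -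
      pinskerOmega a b k t n * (2 * (k : ℝ) ^ 2 / (((k : ℝ) + 1) * (2 * (k : ℝ) + 1)))|
      ≤ 2 + pinskerOmega a b k t n / Real.log (n + 2) := by
  have h1 := aux_sum k n hk _ hw hn
  set w := pinskerOmega a b k t n with hwdef
  have hlog : 0 < Real.log ((n:ℝ) + 2) := Real.log_pos (by have := n.cast_nonneg (α := ℝ); linarith)
  have hj0 : ((pinskerJ0 a b k t n : ℕ) : ℝ) ≤ w / Real.log (n + 2) + 1 := by
    unfold pinskerJ0
    push_cast
    have := Nat.floor_le (div_pos hw hlog).le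
    linarith
  have hb : ∀ j ∈ Finset.Icc 1 n, (max 0 (1 - ((j:ℝ) / w) ^ k)) ^ 2 ≤ (pinskerWeight a b k t n j) ^ 2
      ∧ (pinskerWeight a b k t n j) ^ 2 ≤ (max 0 (1 - ((j:ℝ) / w) ^ k)) ^ 2 +
        (if j ≤ pinskerJ0 a b k t n then 1 else 0) := by
    intro j hj
    have hj2 := (Finset.mem_Icc.1 hj).2
    unfold pinskerWeight
    split_ifs with h
    · have h0 : 0 ≤ ((j:ℝ) / w) ^ k := by positivity
      have : max 0 (1 - ((j:ℝ) / w) ^ k) ≤ 1 := max_le (by norm_num) (by linarith)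
      have h2 : 0 ≤ max 0 (1 - ((j:ℝ) / w) ^ k) := le_max_left _ _
      constructor <;> nlinarith
    · rw [← hwdef]; constructor <;> simp
  have h2 := Finset.sum_le_sum (fun j hj => (hb j hj).1)
  have h3 := Finset.sum_le_sum (fun j hj => (hb j hj).2)
  rw [Finset.sum_add_distrib] at h3
  have h4 : ∑ j ∈ Finset.Icc 1 n, (if j ≤ pinskerJ0 a b k t n then (1:ℝ) else 0) ≤
      (pinskerJ0 a b k t n : ℕ) := by
    rw [← Finset.sum_filter]
    simp only [Finset.sum_const, nsmul_eq_mul, mul_one]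
    have : (Finset.filter (fun j => j ≤ pinskerJ0 a b k t n) (Finset.Icc 1 n)) ⊆
        Finset.Icc 1 (pinskerJ0 a b k t n) := by
      intro j hj
      simp only [Finset.mem_filter, Finset.mem_Icc] at hj ⊢
      omega
    have := Finset.card_le_card this
    rw [Nat.card_Icc, Nat.add_sub_cancel] at this
    exact_mod_cast this
  have h5 : 0 < w / Real.log (n + 2) := div_pos hw hlog
  rw [abs_le] at h1 ⊢
  constructor <;> linarith [h1.1, h1.2]

lemma aux_ttilde (a b r : ℝ) (n : ℕ) (S : ℝ → ℝ) (he : 0 < epsn n)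
    (hT : 0 ≤ r / Jfun a b S) :
    0 < ttilde a b r n S ∧ r / Jfun a b S ≤ ttilde a b r n S ∧
      ttilde a b r n S ≤ r / Jfun a b S + epsn n := by
  unfold ttilde
  set T := r / Jfun a b S
  set s := {i : ℕ | 1 ≤ i ∧ T ≤ (i : ℝ) * epsn n} with hs
  have hne : s.Nonempty := by
    obtain ⟨m, hm⟩ := exists_nat_ge (T / epsn n)
    rw [div_le_iff₀ he] at hm
    refine ⟨m + 1, by omega, ?_⟩
    push_cast
    nlinarith
  have hmem := Nat.sInf_mem hne
  obtain ⟨h1, h2⟩ := hmem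
  have h1' : (1:ℝ) ≤ (sInf s : ℕ) := by exact_mod_cast h1
  refine ⟨by positivity, by linarith, ?_⟩
  rcases eq_or_lt_of_le h1 with h | h
  · rw [← h]; simp [hT]
  · have h3 : sInf s - 1 ∉ s := Nat.notMem_of_lt_sInf (by omega)
    have h4 : ¬ (T ≤ ((sInf s - 1 : ℕ) : ℝ) * epsn n) := fun h5 => h3 ⟨by omega, h5⟩
    rw [Nat.cast_sub h1] at h4
    push_cast at h4
    nlinarith

lemma aux_S (L : ℝ) (hL : 1 ≤ L) (S : ℝ → ℝ) (hS : SigmaL L S) (B u : ℝ) (hu : |u| ≤ B) :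
    |∫ z in (0:ℝ)..u, S z| ≤ (L + L * B) * B := by
  have hB : 0 ≤ B := (abs_nonneg u).trans hu
  have h : ∀ z ∈ Set.uIoc 0 u, ‖S z‖ ≤ L + L * B := by
    intro z hz
    have hz' : |z| ≤ B := by
      have := abs_sub_left_of_mem_uIcc (uIoc_subset_uIcc hz)
      simp at this
      linarith
    have h0 := hS.2.1 0 (by simp; linarith)
    have h1 := hS.1.2 z 0
    rw [sub_zero] at h1
    have h2 : |S z| ≤ |S z - S 0| + |S 0| := by simpa using abs_add_le (S z - S 0) (S 0)
    rw [Real.norm_eq_abs]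
    nlinarith
  have := intervalIntegral.norm_integral_le_of_norm_le_const h
  rw [sub_zero, Real.norm_eq_abs] at this
  refine this.trans ?_
  gcongr

lemma aux_J (L a b : ℝ) (hL : 1 ≤ L) (hab : a < b) :
    ∃ c : ℝ, 0 < c ∧ ∀ S : ℝ → ℝ, SigmaL L S → Jfun a b S = 0 ∨ c ≤ Jfun a b S := by
  set B := max |a| |b|
  refine ⟨(b - a) * (Real.exp (-(2 * ((L + L * B) * B))) * Real.exp (-(2 * ((L + L * 1) * 1)))),
    mul_pos (by linarith) (by positivity), ?_⟩
  intro S hS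
  have hSc : Continuous S := hS.1.1
  have hF : Continuous (fun y : ℝ => Real.exp (2 * ∫ z in (0:ℝ)..y, S z)) := by
    have := intervalIntegral.continuous_primitive (μ := volume)
      (fun x y => hSc.intervalIntegrable x y) 0
    fun_prop
  by_cases hi : Integrable (fun y : ℝ => Real.exp (2 * ∫ z in (0:ℝ)..y, S z))
  · right
    have hq : Real.exp (-(2 * ((L + L * 1) * 1))) ≤ qdenom S := by
      unfold qdenom
      have h1 : ∫ y in Icc (0:ℝ) 1, Real.exp (-(2 * ((L + L * 1) * 1))) ≤
          ∫ y in Icc (0:ℝ) 1, Real.exp (2 * ∫ z in (0:ℝ)..y, S z) := by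
        apply setIntegral_mono_on (by simp) hi.integrableOn measurableSet_Icc
        intro y hy
        have := aux_S L hL S hS 1 y (by rw [abs_of_nonneg hy.1]; exact hy.2)
        rw [abs_le] at this
        apply Real.exp_le_exp.2
        linarith [this.1]
      have h2 := setIntegral_le_integral (s := Icc (0:ℝ) 1) hi
        (Eventually.of_forall fun y => (Real.exp_pos _).le)
      simp at h1 h2 ⊢
      linarith
    have hq0 : 0 < qdenom S := (Real.exp_pos _).trans_le hq
    have hcont : Continuous (fun u => 1 / qdens S u) := by
      unfold qdens
      refine continuous_const.div (hF.div_const _) ?_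
      intro x
      positivity
    have := intervalIntegral.integral_mono_on hab.le
      (continuous_const.intervalIntegrable (μ := volume) a b)
      (hcont.intervalIntegrable a b)
      (f := fun _ => Real.exp (-(2 * ((L + L * B) * B))) * Real.exp (-(2 * ((L + L * 1) * 1)))) ?_
    · rw [intervalIntegral.integral_const, smul_eq_mul] at this
      exact this
    · intro x hx
      have hxB : |x| ≤ B := abs_le_max_abs_abs hx.1 hx.2
      have h1 := aux_S L hL S hS B x hxB
      rw [abs_le] at h1
      unfold qdens
      rw [one_div_div, div_eq_mul_inv, ← Real.exp_neg, mul_comm]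
      apply mul_le_mul hq _ (Real.exp_pos _).le hq0.le
      apply Real.exp_le_exp.2
      linarith [h1.2]
  · left
    have : qdenom S = 0 := integral_undef hi
    unfold Jfun qdens
    simp [this]

/-- with `λ̃` the Pinsker weights with parameter `t̃_n(S)`,
`sup_{S∈Σ_L} | n^{−1/(2k+1)} Σ_{j=1}^n λ̃(j)² − (A_k r/J(S))^{1/(2k+1)} 2k²/((k+1)(2k+1)) | → 0`
as odd `n → ∞`; stated as uniform convergence over `Σ_L`. -/
theorem stmt7 (L a b : ℝ) (hL : 1 ≤ L) (hab : a < b) (hba : 1 ≤ b - a)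
    (k : ℕ) (hk : 1 ≤ k) (r : ℝ) (hr : 0 < r) :
    ∀ δ : ℝ, 0 < δ → ∃ N : ℕ, 3 ≤ N ∧ ∀ n : ℕ, N ≤ n → Odd n →
      ∀ S : ℝ → ℝ, SigmaL L S →
        |(n : ℝ) ^ (-(1 : ℝ) / (2 * k + 1)) *
            (∑ j ∈ Finset.Icc 1 n, (pinskerWeight a b k (ttilde a b r n S) n j) ^ 2) -
          (Ak a b k * (r / Jfun a b S)) ^ ((1 : ℝ) / (2 * k + 1)) *
            (2 * (k : ℝ) ^ 2 / (((k : ℝ) + 1) * (2 * (k : ℝ) + 1)))| ≤ δ := by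
  intro δ hδ
  obtain ⟨c, hc, hJ⟩ := aux_J L a b hL hab
  have hkR : (1:ℝ) ≤ k := by exact_mod_cast hk
  have hA : 0 < Ak a b k := by
    unfold Ak
    have : 0 < b - a := by linarith
    positivity
  set A := Ak a b k with hAdef
  set p : ℝ := (1:ℝ) / (2 * k + 1) with hp
  have hp0 : 0 < p := by positivity
  have hp1 : p ≤ 1 := by
    rw [hp, div_le_one (by positivity)]; linarith
  set C : ℝ := 2 * (k : ℝ) ^ 2 / (((k : ℝ) + 1) * (2 * (k : ℝ) + 1)) with hC
  have hC0 : 0 ≤ C := by positivity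
  have hC1 : C ≤ 1 := by
    rw [hC, div_le_one (by positivity)]; nlinarith
  have hlogn : Tendsto (fun n : ℕ => Real.log (n:ℝ)) atTop atTop :=
    Real.tendsto_log_atTop.comp tendsto_natCast_atTop_atTop
  have heps : Tendsto (fun n : ℕ => epsn n) atTop (nhds 0) := by
    unfold epsn
    exact hlogn.const_div_atTop 1
  have hlim1 : Tendsto (fun n : ℕ => 2 * (n:ℝ) ^ (-p)) atTop (nhds 0) := by
    have := ((tendsto_rpow_neg_atTop hp0).comp tendsto_natCast_atTop_atTop).const_mul (2:ℝ)
    simpa using this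
  have hlim2 : Tendsto (fun n : ℕ => (A * (r / c + 1)) ^ p / Real.log ((n:ℝ) + 2)) atTop (nhds 0) := by
    refine Tendsto.const_div_atTop (Real.tendsto_log_atTop.comp ?_) _
    exact tendsto_atTop_add_const_right _ _ tendsto_natCast_atTop_atTop
  have hlim3 : Tendsto (fun n : ℕ => (A * epsn n) ^ p) atTop (nhds 0) := by
    have := (heps.const_mul A).rpow_const (p := p) (Or.inr hp0.le)
    simpa [Real.zero_rpow hp0.ne'] using this
  have hlim := (hlim1.add hlim2).add hlim3
  simp only [add_zero] at hlim
  have ev1 := hlim.eventually (gt_mem_nhds hδ)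
  have ev2 := heps.eventually (gt_mem_nhds one_pos)
  have ev3 := tendsto_natCast_atTop_atTop (R := ℝ) |>.eventually_ge_atTop (A * (r / c + 1))
  obtain ⟨N, hN⟩ := eventually_atTop.1 (ev1.and (ev2.and ev3))
  refine ⟨max N 3, le_max_right _ _, ?_⟩
  intro n hn _ S hS
  obtain ⟨h1, h2, h3⟩ := hN n ((le_max_left _ _).trans hn)
  have hn3 : 3 ≤ n := (le_max_right _ _).trans hn
  have hnR : (3:ℝ) ≤ n := by exact_mod_cast hn3
  have he : 0 < epsn n := by
    unfold epsn
    exact one_div_pos.2 (Real.log_pos (by linarith))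
  have hT : 0 ≤ r / Jfun a b S ∧ r / Jfun a b S ≤ r / c := by
    rcases hJ S hS with h | h
    · rw [h]; simp; positivity
    · exact ⟨div_nonneg hr.le (hc.le.trans h), by gcongr⟩
  obtain ⟨ht0, ht1, ht2⟩ := aux_ttilde a b r n S he hT.1
  set T := r / Jfun a b S with hTdef
  set t := ttilde a b r n S with htdef
  have hwn : pinskerOmega a b k t n = (A * t) ^ p * (n:ℝ) ^ p := by
    unfold pinskerOmega
    rw [Real.mul_rpow (by positivity) (by positivity)]
  have hAt : A * t ≤ A * (r / c + 1) := by
    gcongr; linarith [hT.2]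
  have hw : 0 < pinskerOmega a b k t n := by rw [hwn]; positivity
  have hwle : pinskerOmega a b k t n ≤ n := by
    unfold pinskerOmega
    have e : (n:ℝ) = ((n:ℝ) ^ (2 * k + 1)) ^ p := by
      rw [← Real.rpow_natCast, ← Real.rpow_mul (by positivity), hp]
      push_cast
      rw [mul_one_div_cancel (by positivity), Real.rpow_one]
    conv_rhs => rw [e]
    apply Real.rpow_le_rpow (by positivity) _ hp0.le
    rw [pow_succ]
    apply mul_le_mul_of_nonneg_right _ (by positivity)
    exact (hAt.trans h3).trans (le_self_pow₀ (by linarith) (by omega))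
  have main := aux_weight a b k n hk t hw hwle
  rw [← hC] at main
  set Sg := ∑ j ∈ Finset.Icc 1 n, (pinskerWeight a b k t n j) ^ 2
  have hnp : (0:ℝ) < (n:ℝ) ^ (-p) := by positivity
  have hcancel : (n:ℝ) ^ (-p) * (n:ℝ) ^ p = 1 := by
    rw [← Real.rpow_add (by positivity)]; simp
  have hexp : (-(1:ℝ)) / (2 * k + 1) = -p := by rw [hp]; ring
  rw [hexp]
  have hlog2 : 0 < Real.log ((n:ℝ) + 2) := Real.log_pos (by linarith)
  have m1 : |(n:ℝ) ^ (-p) * Sg - (A * t) ^ p * C| ≤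
      2 * (n:ℝ) ^ (-p) + (A * (r / c + 1)) ^ p / Real.log ((n:ℝ) + 2) := by
    have e1 : (n:ℝ) ^ (-p) * Sg - (A * t) ^ p * C =
        (n:ℝ) ^ (-p) * (Sg - pinskerOmega a b k t n * C) := by
      rw [hwn]
      linear_combination (A * t) ^ p * C * hcancel
    have e2 : (n:ℝ) ^ (-p) * (2 + pinskerOmega a b k t n / Real.log ((n:ℝ) + 2)) =
        2 * (n:ℝ) ^ (-p) + (A * t) ^ p / Real.log ((n:ℝ) + 2) := by
      rw [hwn]
      linear_combination (A * t) ^ p / Real.log ((n:ℝ) + 2) * hcancel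
    rw [e1, abs_mul, abs_of_pos hnp]
    refine (mul_le_mul_of_nonneg_left main hnp.le).trans ?_
    rw [e2]
    gcongr
  have m2 : (A * T) ^ p ≤ (A * t) ^ p :=
    Real.rpow_le_rpow (mul_nonneg hA.le hT.1) (by gcongr) hp0.le
  have m3 : (A * t) ^ p ≤ (A * T) ^ p + (A * epsn n) ^ p := by
    refine le_trans (Real.rpow_le_rpow (by positivity) (?_ : A * t ≤ A * T + A * epsn n) hp0.le) ?_
    · rw [← mul_add]; gcongr
    · exact Real.rpow_add_le_add_rpow (mul_nonneg hA.le hT.1) (by positivity) hp0.le hp1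
  have m4 : 0 ≤ ((A * t) ^ p - (A * T) ^ p) * C := mul_nonneg (by linarith) hC0
  have m5 : ((A * t) ^ p - (A * T) ^ p) * C ≤ (A * epsn n) ^ p :=
    (mul_le_of_le_one_right (by linarith) hC1).trans (by linarith)
  rw [sub_mul] at m4 m5
  rw [abs_le] at m1 ⊢
  obtain ⟨m1a, m1b⟩ := m1
  constructor <;> linarith
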